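/- Define, for ρ > 0, I_XY(ρ) = log( ρ · √(1 + ρ⁻¹) ) + ρ⁻¹ · log √(1 + ρ) − ρ + ρ⁻¹ · √(1 + ρ⁻¹) · F(ρ) + ψ(ρ⁻¹) − ψ(1) − 1, where F(ρ) = ∫₀^∞ ξ · K₁(√(1 + ρ⁻¹) · ξ) · I₁(ξ) · log I₁(ξ) dξ. Then I_XY(ρ) → ∞ as ρ → ∞; that is, the capacity lower bound grows without bound in the signal-to-noise ratio parameter ρ. -/

import Mathlib

open Real MeasureTheory Set Filter

/-- Modified Bessel function of the first kind of order one,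
`I₁(z) = ∑_{k=0}^∞ (z/2)^(2k+1) / (k! (k+1)!)`. -/
noncomputable def besselI1 (z : ℝ) : ℝ :=
  ∑' k : ℕ, (z / 2) ^ (2 * k + 1) / ((Nat.factorial k : ℝ) * (Nat.factorial (k + 1) : ℝ))

/-- Modified Bessel function of the second kind of order one,
`K₁(z) = ∫₀^∞ exp (−z cosh t) cosh t dt`. -/
noncomputable def besselK1 (z : ℝ) : ℝ :=
  ∫ t in Ioi (0 : ℝ), Real.exp (-z * Real.cosh t) * Real.cosh t

/-- Digamma function `ψ(x) = d/dx log Γ(x)`. -/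
noncomputable def digamma (x : ℝ) : ℝ :=
  deriv (fun y : ℝ => Real.log (Real.Gamma y)) x

/-- Conditional output density of the noncentral chi channel with four degrees of freedom. -/
noncomputable def condDensity (σN x y : ℝ) : ℝ :=
  (2 / σN ^ 2) * (y ^ 2 / x) * Real.exp (-(x ^ 2 + y ^ 2) / σN ^ 2) *
    besselI1 (2 * x * y / σN ^ 2)

/-- Rayleigh input density with mean-square `σS²`. -/
noncomputable def rayleighDensity (σS x : ℝ) : ℝ :=
  (2 * x / σS ^ 2) * Real.exp (-x ^ 2 / σS ^ 2)

/-- `F(ρ) = ∫₀^∞ ξ K₁(√(1+ρ⁻¹) ξ) I₁(ξ) log I₁(ξ) dξ`. -/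
noncomputable def Fint (ρ : ℝ) : ℝ :=
  ∫ ξ in Ioi (0 : ℝ),
    ξ * besselK1 (Real.sqrt (1 + ρ⁻¹) * ξ) * besselI1 ξ * Real.log (besselI1 ξ)

/-- Closed-form mutual information of Theorem 1. -/
noncomputable def Ixy (ρ : ℝ) : ℝ :=
  Real.log (ρ * Real.sqrt (1 + ρ⁻¹)) + ρ⁻¹ * Real.log (Real.sqrt (1 + ρ)) - ρ +
    ρ⁻¹ * Real.sqrt (1 + ρ⁻¹) * Fint ρ + digamma ρ⁻¹ - digamma 1 - 1

/-!
Put `a = √(1 + ρ⁻¹)`, so that `a² - 1 = ρ⁻¹`. Then `a (a² - 1) x K₁(a x) I₁(x) dx` is a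
probability measure on `(0, ∞)`, and `ρ⁻¹ √(1 + ρ⁻¹) F(ρ)` is the expectation of `log I₁` under it.
Integrating the power series of `I₁` termwise against `K₁`, whose moments are
`n! / aⁿ⁺¹ ∫ (cosh t)⁻ⁿ dt`, shows that the mean of `x` is at least `2 a ρ` and that of `1 / x` at
most `a`.

Since `I₁(x)` has size `eˣ / √x` and `x` is typically of order `ρ`, little is lost in the bound
`log I₁(x) ≥ (1 - 1 / (4 m)) x - 1 / x - log (4 √m)` with `m = ρ`, and the expectation is at least
`2 ρ - log ρ / 2 - O(1)`. Convexity of `log Γ` gives `ψ(ρ⁻¹) - ψ(1) ≥ -ρ`. The linear terms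
`2 ρ - ρ - ρ` cancel, and the first logarithm in `I_XY`, at least `log ρ`, leaves
`log ρ / 2 - O(1)`.
-/

lemma integrable_of_hasSum_of_summable_integral_norm {α ι E : Type*} [MeasurableSpace α]
    {μ : Measure α} [Countable ι] [NormedAddCommGroup E] {F : ι → α → E} {f : α → E}
    (hF_int : ∀ i, Integrable (F i) μ) (hF_sum : Summable fun i => ∫ x, ‖F i x‖ ∂μ)
    (hf : ∀ᵐ x ∂μ, HasSum (fun i => F i x) (f x)) : Integrable f μ := by
  refine ⟨aestronglyMeasurable_of_tendsto_ae (u := atTop) (f := fun s x => ∑ i ∈ s, F i x)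
    (fun s => ?_) hf, ?_⟩
  · exact Finset.aestronglyMeasurable_fun_sum s fun i _ => (hF_int i).aestronglyMeasurable
  · calc ∫⁻ x, ‖f x‖ₑ ∂μ ≤ ∫⁻ x, ∑' i, ‖F i x‖ₑ ∂μ := by
          refine lintegral_mono_ae ?_
          filter_upwards [hf] with x hx
          rw [← hx.tsum_eq]
          exact enorm_tsum_le_tsum_enorm
      _ = ∑' i, ENNReal.ofReal (∫ x, ‖F i x‖ ∂μ) := by
          rw [lintegral_tsum fun i => (hF_int i).aestronglyMeasurable.enorm]
          simp only [ofReal_integral_norm_eq_lintegral_enorm (hF_int _)]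
      _ < ⊤ := hF_sum.tsum_ofReal_lt_top

section BesselI1

variable {x m : ℝ}

lemma sq_four_pow_le_mul_sq_centralBinom {n : ℕ} (hn : 1 ≤ n) :
    (4 ^ n) ^ 2 ≤ 4 * n * n.centralBinom ^ 2 := by
  induction n, hn using Nat.le_induction with
  | base => decide
  | succ n hn ih =>
    have hrec := n.succ_mul_centralBinom_succ
    refine Nat.le_of_mul_le_mul_left ?_ (by positivity : 0 < n * (n + 1))
    calc n * (n + 1) * (4 ^ (n + 1)) ^ 2 = 16 * n * (n + 1) * (4 ^ n) ^ 2 := by ring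
      _ ≤ 16 * n * (n + 1) * (4 * n * n.centralBinom ^ 2) := by gcongr
      _ = 16 * (4 * n * (n + 1)) * n * n.centralBinom ^ 2 := by ring
      _ ≤ 16 * (2 * n + 1) ^ 2 * n * n.centralBinom ^ 2 := by gcongr; nlinarith
      _ = 4 * n * (2 * (2 * n + 1) * n.centralBinom) ^ 2 := by ring
      _ = n * (n + 1) * (4 * (n + 1 : ℕ) * (n + 1).centralBinom ^ 2) := by
        rw [← hrec]; ring

lemma four_pow_le_sqrt_mul_centralBinom {n : ℕ} (hn : 1 ≤ n) :
    (4 : ℝ) ^ n ≤ 2 * √n * n.centralBinom := by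
  refine (pow_le_pow_iff_left₀ (by positivity) (by positivity) two_ne_zero).1 ?_
  rw [mul_pow, mul_pow, Real.sq_sqrt n.cast_nonneg]
  norm_num1
  exact_mod_cast sq_four_pow_le_mul_sq_centralBinom hn

/-- The coefficient of `z ^ (2 * k + 1)` in the power series of `I₁(z)`. -/
noncomputable def besselI1Coeff (k : ℕ) : ℝ :=
  (1 / 2) ^ (2 * k + 1) / ((k.factorial : ℝ) * ((k + 1).factorial : ℝ))

lemma besselI1Coeff_pos (k : ℕ) : 0 < besselI1Coeff k := by
  unfold besselI1Coeff; positivity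

lemma besselI1Coeff_eq_centralBinom (k : ℕ) :
    besselI1Coeff k = (k + 1).centralBinom / 4 ^ (k + 1) / ((2 * k + 1).factorial : ℝ) := by
  have hchoose : ((k + 1).centralBinom : ℝ) =
      (2 * (k + 1)).factorial / ((k + 1).factorial * (k + 1).factorial) := by
    rw [Nat.centralBinom_eq_two_mul_choose, Nat.cast_choose ℝ (by lia), two_mul,
      Nat.add_sub_cancel]
  rw [hchoose, besselI1Coeff, show 2 * (k + 1) = 2 * k + 1 + 1 by ring,
    Nat.factorial_succ (2 * k + 1), Nat.factorial_succ k, one_div_pow, pow_succ 2, pow_mul 2]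
  push_cast
  field_simp
  ring

lemma besselI1Coeff_le (k : ℕ) : besselI1Coeff k ≤ 1 / ((2 * k + 1).factorial : ℝ) := by
  rw [besselI1Coeff_eq_centralBinom]
  gcongr
  exact div_le_one_of_le₀ (mod_cast (k + 1).centralBinom_le_four_pow) (by positivity)

lemma hasSum_besselI1 (x : ℝ) :
    HasSum (fun k => besselI1Coeff k * x ^ (2 * k + 1)) (besselI1 x) := by
  have hsummable : Summable fun k => besselI1Coeff k * x ^ (2 * k + 1) := by
    refine (Real.hasSum_sinh |x|).summable.of_norm_bounded fun k => ?_
    rw [norm_mul, norm_pow, Real.norm_eq_abs x, Real.norm_of_nonneg (besselI1Coeff_pos k).le,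
      ← one_div_mul_eq_div]
    gcongr
    exact besselI1Coeff_le k
  convert! hsummable.hasSum using 1
  refine tsum_congr fun k => ?_
  rw [besselI1Coeff, div_pow, one_div_pow]
  ring

lemma measurable_besselI1 : Measurable besselI1 := by
  unfold besselI1
  exact Measurable.tsum fun k => by fun_prop

lemma besselI1_le_exp (hx : 0 ≤ x) : besselI1 x ≤ exp x :=
  calc besselI1 x ≤ sinh x := by
        refine hasSum_le (fun k => ?_) (hasSum_besselI1 x) (Real.hasSum_sinh x)
        rw [← one_div_mul_eq_div]
        gcongr
        exact besselI1Coeff_le k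
    _ ≤ exp x := by linarith [sinh_add_cosh x, Real.cosh_pos x]

-- `√(k + 1)` is, up to a constant, the factor by which the Taylor coefficients of `sinh` exceed
-- those of `I₁`. Contracting the argument of `sinh` by `1 - 1 / (4 * m)` compensates for it
-- uniformly in `k`; the worst case is `k + 1 ≈ m`, as `u ≤ exp (u - 1)` is sharp at `u = 1`.
lemma one_sub_pow_mul_sqrt_le (hm : 1 / 2 ≤ m) (k : ℕ) :
    (1 - 1 / (4 * m)) ^ (2 * k + 1) * √(k + 1) ≤ √m := by
  have hm0 : 0 < m := by linarith
  have hinv : 1 / (4 * m) ≤ 1 / 2 := by gcongr; linarith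
  have hpow : (1 - 1 / (4 * m)) ^ (2 * k + 1) ≤ exp (-((2 * k + 1) / (4 * m))) := by
    calc (1 - 1 / (4 * m)) ^ (2 * k + 1) ≤ exp (-(1 / (4 * m))) ^ (2 * k + 1) := by
          gcongr
          · linarith
          · exact Real.one_sub_le_exp_neg _
      _ = exp (-((2 * k + 1) / (4 * m))) := by
          rw [← Real.exp_nat_mul]; congr 1; push_cast; ring
  have hsqrt : √(k + 1) ≤ √m * exp (((k + 1) / m - 1) / 2) := by
    rw [Real.exp_half, ← Real.sqrt_mul hm0.le]
    refine Real.sqrt_le_sqrt ?_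
    rw [← div_le_iff₀' hm0]
    linarith [Real.add_one_le_exp ((k + 1) / m - 1)]
  calc (1 - 1 / (4 * m)) ^ (2 * k + 1) * √(k + 1)
      ≤ exp (-((2 * k + 1) / (4 * m))) * (√m * exp (((k + 1) / m - 1) / 2)) := by gcongr
    _ = √m * exp (1 / (4 * m) - 1 / 2) := by
        rw [mul_left_comm, ← Real.exp_add]; congr 2; field_simp; ring
    _ ≤ √m := mul_le_of_le_one_right (by positivity) (Real.exp_le_one_iff.2 (by linarith))

lemma sinh_mul_le_besselI1 (hm : 1 / 2 ≤ m) (hx : 0 ≤ x) :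
    sinh ((1 - 1 / (4 * m)) * x) / (2 * √m) ≤ besselI1 x := by
  have : 0 < m := by linarith
  have hs : 0 ≤ 1 - 1 / (4 * m) := by
    rw [sub_nonneg, div_le_one₀ (by positivity)]; linarith
  refine hasSum_le (fun k => ?_) ((Real.hasSum_sinh _).div_const _) (hasSum_besselI1 x)
  have hcoeff : (1 - 1 / (4 * m)) ^ (2 * k + 1) / (2 * √m) ≤
      (k + 1).centralBinom / 4 ^ (k + 1) := by
    rw [div_le_div_iff₀ (by positivity) (by positivity)]
    have hbinom := four_pow_le_sqrt_mul_centralBinom (n := k + 1) (by lia)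
    push_cast at hbinom
    calc (1 - 1 / (4 * m)) ^ (2 * k + 1) * 4 ^ (k + 1)
        ≤ (1 - 1 / (4 * m)) ^ (2 * k + 1) * (2 * √(k + 1) * (k + 1).centralBinom) := by gcongr
      _ = (1 - 1 / (4 * m)) ^ (2 * k + 1) * √(k + 1) * (2 * (k + 1).centralBinom) := by ring
      _ ≤ √m * (2 * (k + 1).centralBinom) := by gcongr; exact one_sub_pow_mul_sqrt_le hm k
      _ = (k + 1).centralBinom * (2 * √m) := by ring
  calc ((1 - 1 / (4 * m)) * x) ^ (2 * k + 1) / ((2 * k + 1).factorial : ℝ) / (2 * √m)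
      = (1 - 1 / (4 * m)) ^ (2 * k + 1) / (2 * √m) / ((2 * k + 1).factorial : ℝ) *
          x ^ (2 * k + 1) := by rw [mul_pow]; ring
    _ ≤ besselI1Coeff k * x ^ (2 * k + 1) := by
        rw [besselI1Coeff_eq_centralBinom]
        gcongr

lemma exp_sub_inv_le_two_mul_sinh (hx : 0 < x) : exp (x - 1 / (2 * x)) ≤ 2 * sinh x := by
  have exp_neg_le {y : ℝ} (hy : 0 < y) : exp (-y) ≤ 1 / (1 + y) := by
    rw [Real.exp_neg, ← one_div]
    gcongr
    linarith [Real.add_one_le_exp y]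
  have hsum : exp (-(1 / (2 * x))) + exp (-(2 * x)) ≤ 1 :=
    calc exp (-(1 / (2 * x))) + exp (-(2 * x))
        ≤ 1 / (1 + 1 / (2 * x)) + 1 / (1 + 2 * x) :=
          add_le_add (exp_neg_le (by positivity)) (exp_neg_le (by positivity))
      _ = 1 := by field_simp; ring
  calc exp (x - 1 / (2 * x)) = exp x * exp (-(1 / (2 * x))) := by rw [← Real.exp_add]; rfl
    _ ≤ exp x * (1 - exp (-(2 * x))) := by gcongr; linarith
    _ = 2 * sinh x := by rw [mul_sub, ← Real.exp_add, Real.sinh_eq]; ring_nf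

lemma exp_le_besselI1 (hm : 1 / 2 ≤ m) (hx : 0 < x) :
    exp ((1 - 1 / (4 * m)) * x - 1 / x) / (4 * √m) ≤ besselI1 x := by
  have hs : 1 / 2 ≤ 1 - 1 / (4 * m) := by
    have : 1 / (4 * m) ≤ 1 / 2 := by gcongr; linarith
    linarith
  calc exp ((1 - 1 / (4 * m)) * x - 1 / x) / (4 * √m)
      ≤ exp ((1 - 1 / (4 * m)) * x - 1 / (2 * ((1 - 1 / (4 * m)) * x))) / (4 * √m) := by
        gcongr
        nlinarith
    _ ≤ 2 * sinh ((1 - 1 / (4 * m)) * x) / (4 * √m) := by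
        gcongr
        exact exp_sub_inv_le_two_mul_sinh (by positivity)
    _ = sinh ((1 - 1 / (4 * m)) * x) / (2 * √m) := by ring
    _ ≤ besselI1 x := sinh_mul_le_besselI1 hm hx.le

lemma besselI1_pos (hx : 0 < x) : 0 < besselI1 x :=
  lt_of_lt_of_le (by positivity) (exp_le_besselI1 (m := 1) (by norm_num) hx)

lemma log_besselI1_le (hx : 0 < x) : log (besselI1 x) ≤ x :=
  (Real.log_le_iff_le_exp (besselI1_pos hx)).2 (besselI1_le_exp hx.le)

lemma le_log_besselI1 (hm : 1 / 2 ≤ m) (hx : 0 < x) :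
    (1 - 1 / (4 * m)) * x - 1 / x - log (4 * √m) ≤ log (besselI1 x) := by
  have : 0 < m := by linarith
  have h := Real.log_le_log (by positivity) (exp_le_besselI1 hm hx)
  rwa [Real.log_div (Real.exp_ne_zero _) (by positivity), Real.log_exp] at h

end BesselI1

section SechIntegral

variable {n : ℕ}

lemma inv_cosh_pow_le_exp (hn : 1 ≤ n) (t : ℝ) : (cosh t ^ n)⁻¹ ≤ 2 * exp (-t) :=
  calc (cosh t ^ n)⁻¹ ≤ (exp t / 2)⁻¹ := by
        gcongr
        calc exp t / 2 ≤ cosh t := by rw [Real.cosh_eq]; linarith [Real.exp_pos (-t)]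
          _ ≤ cosh t ^ n := le_self_pow₀ (Real.one_le_cosh t) (by lia)
    _ = 2 * exp (-t) := by rw [inv_div, Real.exp_neg, div_eq_mul_inv]

lemma integrableOn_inv_cosh_pow (hn : 1 ≤ n) :
    IntegrableOn (fun t : ℝ => (cosh t ^ n)⁻¹) (Ioi 0) := by
  have hcont : Continuous fun t : ℝ => (cosh t ^ n)⁻¹ :=
    (Real.continuous_cosh.pow n).inv₀ fun t => (pow_pos (Real.cosh_pos t) n).ne'
  refine Integrable.mono' ((integrableOn_exp_neg_Ioi 0).const_mul 2) hcont.aestronglyMeasurable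
    (Eventually.of_forall fun t => ?_)
  rw [Real.norm_of_nonneg (inv_nonneg.2 (pow_nonneg (Real.cosh_pos t).le n))]
  exact inv_cosh_pow_le_exp hn t

/-- The integral `∫₀^∞ (cosh t)⁻ⁿ dt`, to which the moments of `K₁` reduce by Fubini. -/
noncomputable def sechIntegral (n : ℕ) : ℝ :=
  ∫ t in Ioi (0 : ℝ), (cosh t ^ n)⁻¹

lemma sechIntegral_succ_le (hn : 1 ≤ n) : sechIntegral (n + 1) ≤ sechIntegral n := by
  refine integral_mono (integrableOn_inv_cosh_pow (by lia)) (integrableOn_inv_cosh_pow hn)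
    fun t => ?_
  have := Real.one_le_cosh t
  dsimp only
  gcongr
  lia

lemma hasDerivAt_sinh_mul_inv_cosh_pow (n : ℕ) (t : ℝ) :
    HasDerivAt (fun t => sinh t * (cosh t ^ (n + 1))⁻¹)
      ((n + 1) * (cosh t ^ (n + 2))⁻¹ - n * (cosh t ^ n)⁻¹) t := by
  have hc : cosh t ≠ 0 := (Real.cosh_pos t).ne'
  refine ((Real.hasDerivAt_sinh t).mul
    (((Real.hasDerivAt_cosh t).pow (n + 1)).inv (pow_ne_zero _ hc))).congr_deriv ?_
  have hsq : sinh t ^ 2 = cosh t ^ 2 - 1 := Real.sinh_sq t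
  simp only [Nat.add_sub_cancel, Pi.pow_apply, Pi.inv_apply]
  push_cast
  field_simp
  ring_nf
  rw [hsq]
  ring

lemma tendsto_tanh_atTop : Tendsto tanh atTop (nhds 1) := by
  have hlim : Tendsto (fun t : ℝ => 1 - exp (-t)) atTop (nhds 1) := by
    simpa using Real.tendsto_exp_neg_atTop_nhds_zero.const_sub 1
  refine tendsto_of_tendsto_of_tendsto_of_le_of_le hlim tendsto_const_nhds (fun t => ?_)
    fun t => (Real.tanh_lt_one t).le
  rw [Real.tanh_eq_sinh_div_cosh, le_div_iff₀ (Real.cosh_pos t)]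
  nlinarith [Real.one_le_cosh t, Real.exp_pos (-t), Real.cosh_sub_sinh t]

lemma tendsto_sinh_mul_inv_cosh_pow_atTop (hn : 1 ≤ n) :
    Tendsto (fun t : ℝ => sinh t * (cosh t ^ (n + 1))⁻¹) atTop (nhds 0) := by
  have hexp : Tendsto (fun t : ℝ => 2 * exp (-t)) atTop (nhds 0) := by
    simpa using Real.tendsto_exp_neg_atTop_nhds_zero.const_mul 2
  refine squeeze_zero' ?_ (Eventually.of_forall fun t => ?_) hexp
  · filter_upwards [eventually_ge_atTop 0] with t ht
    exact mul_nonneg (Real.sinh_nonneg_iff.2 ht) (inv_nonneg.2 (pow_nonneg (Real.cosh_pos t).le _))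
  · have := Real.cosh_pos t
    calc sinh t * (cosh t ^ (n + 1))⁻¹ ≤ cosh t * (cosh t ^ (n + 1))⁻¹ := by
          gcongr
          exact (Real.sinh_lt_cosh t).le
      _ = (cosh t ^ n)⁻¹ := by rw [pow_succ]; field_simp
      _ ≤ 2 * exp (-t) := inv_cosh_pow_le_exp hn t

lemma sechIntegral_two : sechIntegral 2 = 1 := by
  have h := integral_Ioi_of_hasDerivAt_of_tendsto' (a := 0)
    (fun t _ => hasDerivAt_sinh_mul_inv_cosh_pow 0 t)
    (by simpa using integrableOn_inv_cosh_pow (n := 2) (by norm_num))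
    (tendsto_tanh_atTop.congr fun t => by
      rw [zero_add, pow_one, Real.tanh_eq_sinh_div_cosh, div_eq_mul_inv])
  simpa [sechIntegral] using h

lemma sechIntegral_add_two (hn : 1 ≤ n) :
    (n + 1) * sechIntegral (n + 2) = n * sechIntegral n := by
  have hi₂ : IntegrableOn (fun t : ℝ => ((n : ℝ) + 1) * (cosh t ^ (n + 2))⁻¹) (Ioi 0) :=
    (integrableOn_inv_cosh_pow (by lia)).const_mul _
  have hi₀ : IntegrableOn (fun t : ℝ => (n : ℝ) * (cosh t ^ n)⁻¹) (Ioi 0) :=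
    (integrableOn_inv_cosh_pow hn).const_mul _
  have h := integral_Ioi_of_hasDerivAt_of_tendsto' (a := 0)
    (fun t _ => hasDerivAt_sinh_mul_inv_cosh_pow n t) (hi₂.sub hi₀)
    (tendsto_sinh_mul_inv_cosh_pow_atTop hn)
  rwa [integral_sub hi₂ hi₀, integral_const_mul, integral_const_mul, Real.sinh_zero, zero_mul,
    sub_zero, sub_eq_zero] at h

end SechIntegral

section BesselK1Moment

variable {n : ℕ} {a : ℝ}

lemma besselK1_nonneg (z : ℝ) : 0 ≤ besselK1 z :=
  integral_nonneg fun t => mul_nonneg (Real.exp_pos _).le (Real.cosh_pos t).le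

lemma measurable_besselK1 : Measurable besselK1 := by
  have hcont : Continuous fun p : ℝ × ℝ => exp (-p.1 * cosh p.2) * cosh p.2 := by
    have := Real.continuous_cosh
    fun_prop
  exact hcont.stronglyMeasurable.integral_prod_right'.measurable

lemma integrableOn_pow_mul_exp_neg_mul (n : ℕ) (ha : 0 < a) :
    IntegrableOn (fun x : ℝ => x ^ n * exp (-a * x)) (Ioi 0) := by
  simpa using integrableOn_rpow_mul_exp_neg_mul_rpow (p := 1) (s := n) (b := a)
    (by linarith [(n.cast_nonneg : (0 : ℝ) ≤ n)]) one_pos ha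

lemma integral_pow_mul_exp_neg_mul (n : ℕ) (ha : 0 < a) :
    ∫ x in Ioi (0 : ℝ), x ^ n * exp (-a * x) = n.factorial / a ^ (n + 1) := by
  have h := Real.integral_rpow_mul_exp_neg_mul_Ioi (a := n + 1) (r := a) (by positivity) ha
  rw [Real.Gamma_nat_eq_factorial, add_sub_cancel_right] at h
  simp only [Real.rpow_natCast, ← Nat.cast_add_one, ← neg_mul] at h
  rw [h, one_div, inv_pow, div_eq_inv_mul]

lemma integral_pow_mul_exp_neg_mul_cosh (n : ℕ) (ha : 0 < a) (t : ℝ) :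
    ∫ x in Ioi (0 : ℝ), x ^ n * (exp (-(a * x) * cosh t) * cosh t) =
      n.factorial / a ^ (n + 1) * (cosh t ^ n)⁻¹ := by
  have hc := Real.cosh_pos t
  calc ∫ x in Ioi (0 : ℝ), x ^ n * (exp (-(a * x) * cosh t) * cosh t)
      = ∫ x in Ioi (0 : ℝ), x ^ n * exp (-(a * cosh t) * x) * cosh t := by
        congr 1 with x
        ring_nf
    _ = n.factorial / a ^ (n + 1) * (cosh t ^ n)⁻¹ := by
        rw [integral_mul_const, integral_pow_mul_exp_neg_mul n (mul_pos ha hc), mul_pow]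
        field_simp
        ring

lemma integrable_uncurry_pow_mul_exp_neg_mul_cosh (hn : 1 ≤ n) (ha : 0 < a) :
    Integrable (Function.uncurry fun x t : ℝ => x ^ n * (exp (-(a * x) * cosh t) * cosh t))
      ((volume.restrict (Ioi 0)).prod (volume.restrict (Ioi 0))) := by
  have hcont : Continuous
      (Function.uncurry fun x t : ℝ => x ^ n * (exp (-(a * x) * cosh t) * cosh t)) := by
    have := Real.continuous_cosh
    unfold Function.uncurry
    fun_prop
  rw [integrable_prod_iff' hcont.aestronglyMeasurable]
  refine ⟨Eventually.of_forall fun t => ?_, ?_⟩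
  · convert! (integrableOn_pow_mul_exp_neg_mul n (mul_pos ha (Real.cosh_pos t))).mul_const
      (cosh t) using 2 with x
    simp only [Function.uncurry_apply_pair]
    ring_nf
  · refine ((integrableOn_inv_cosh_pow hn).const_mul (n.factorial / a ^ (n + 1))).congr
      (Eventually.of_forall fun t => ?_)
    dsimp only
    rw [← integral_pow_mul_exp_neg_mul_cosh n ha t]
    refine setIntegral_congr_fun measurableSet_Ioi fun x (hx : 0 < x) => ?_
    have := Real.cosh_pos t
    exact (Real.norm_of_nonneg (by positivity)).symm

lemma integrableOn_pow_mul_besselK1 (hn : 1 ≤ n) (ha : 0 < a) :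
    IntegrableOn (fun x : ℝ => x ^ n * besselK1 (a * x)) (Ioi 0) := by
  have h := (integrable_uncurry_pow_mul_exp_neg_mul_cosh hn ha).integral_prod_left
  simp only [Function.uncurry_apply_pair, integral_const_mul] at h
  exact h

/-- The moment `∫₀^∞ xⁿ K₁(a x) dx`. -/
noncomputable def besselK1Moment (a : ℝ) (n : ℕ) : ℝ :=
  ∫ x in Ioi (0 : ℝ), x ^ n * besselK1 (a * x)

lemma besselK1Moment_nonneg (a : ℝ) (n : ℕ) : 0 ≤ besselK1Moment a n :=
  setIntegral_nonneg measurableSet_Ioi fun x hx =>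
    mul_nonneg (pow_nonneg (le_of_lt hx) n) (besselK1_nonneg (a * x))

lemma besselK1Moment_eq_mul_sechIntegral (hn : 1 ≤ n) (ha : 0 < a) :
    besselK1Moment a n = n.factorial / a ^ (n + 1) * sechIntegral n := by
  have h := integral_integral_swap (integrable_uncurry_pow_mul_exp_neg_mul_cosh hn ha)
  simp only [integral_const_mul, integral_pow_mul_exp_neg_mul_cosh n ha] at h
  exact h

lemma sq_mul_besselK1Moment_add_two (hn : 1 ≤ n) (ha : 0 < a) :
    a ^ 2 * besselK1Moment a (n + 2) = n * (n + 2) * besselK1Moment a n := by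
  rw [besselK1Moment_eq_mul_sechIntegral hn ha, besselK1Moment_eq_mul_sechIntegral (by lia) ha,
    Nat.factorial_succ, Nat.factorial_succ]
  have h := sechIntegral_add_two hn
  push_cast
  field_simp
  linear_combination (n + 1 + 1) * a ^ (n + 3) * h

lemma mul_besselK1Moment_succ_le (hn : 1 ≤ n) (ha : 0 < a) :
    a * besselK1Moment a (n + 1) ≤ (n + 1) * besselK1Moment a n :=
  calc a * besselK1Moment a (n + 1)
      = (n + 1) * (n.factorial / a ^ (n + 1) * sechIntegral (n + 1)) := by
        rw [besselK1Moment_eq_mul_sechIntegral (by lia) ha, Nat.factorial_succ]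
        push_cast
        field_simp
        ring
    _ ≤ (n + 1) * (n.factorial / a ^ (n + 1) * sechIntegral n) := by
        gcongr
        exact sechIntegral_succ_le hn
    _ = (n + 1) * besselK1Moment a n := by rw [besselK1Moment_eq_mul_sechIntegral hn ha]

lemma pow_mul_besselK1Moment_add_le (hn : 1 ≤ n) (ha : 0 < a) (j : ℕ) :
    a ^ j * besselK1Moment a (n + j) ≤ (n + j) ^ j * besselK1Moment a n := by
  induction j with
  | zero => simp
  | succ j ih =>
    have hsucc := mul_besselK1Moment_succ_le (n := n + j) (by lia) ha
    have := besselK1Moment_nonneg a n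
    push_cast at hsucc ⊢
    calc a ^ (j + 1) * besselK1Moment a (n + j + 1)
        = a ^ j * (a * besselK1Moment a (n + j + 1)) := by ring
      _ ≤ a ^ j * ((n + j + 1) * besselK1Moment a (n + j)) := by gcongr
      _ = (n + j + 1) * (a ^ j * besselK1Moment a (n + j)) := by ring
      _ ≤ (n + j + 1) * ((n + j) ^ j * besselK1Moment a n) := by gcongr
      _ ≤ (n + j + 1) * ((n + (j + 1)) ^ j * besselK1Moment a n) := by gcongr; linarith
      _ = (n + (j + 1)) ^ (j + 1) * besselK1Moment a n := by ring

lemma nat_mul_besselK1Moment_le (hn : 1 ≤ n) (ha : 0 < a) :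
    n * besselK1Moment a n ≤ a * besselK1Moment a (n + 1) := by
  have hrec := sq_mul_besselK1Moment_add_two hn ha
  have hsucc := mul_besselK1Moment_succ_le (n := n + 1) (by lia) ha
  push_cast at hsucc
  refine le_of_mul_le_mul_left ?_ (by positivity : (0 : ℝ) < n + 2)
  calc (n + 2) * (n * besselK1Moment a n) = a * (a * besselK1Moment a (n + 1 + 1)) := by
        linear_combination -hrec
    _ ≤ a * ((n + 1 + 1) * besselK1Moment a (n + 1)) := by gcongr
    _ = (n + 2) * (a * besselK1Moment a (n + 1)) := by ring

lemma besselI1Coeff_succ (k : ℕ) :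
    4 * (k + 1) * (k + 2) * besselI1Coeff (k + 1) = besselI1Coeff k := by
  rw [besselI1Coeff, besselI1Coeff, Nat.factorial_succ (k + 1), Nat.factorial_succ k]
  push_cast
  field_simp
  ring

lemma besselI1Coeff_mul_besselK1Moment (ha : 0 < a) (k : ℕ) :
    besselI1Coeff k * besselK1Moment a (2 * k + 2) = 1 / a ^ (2 * k + 3) := by
  induction k with
  | zero =>
    rw [besselK1Moment_eq_mul_sechIntegral (by lia) ha, sechIntegral_two,
      show besselI1Coeff 0 = 1 / 2 by norm_num [besselI1Coeff]]
    simp only [mul_zero, zero_add, Nat.factorial_two, Nat.cast_ofNat]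
    ring
  | succ k ih =>
    have hrec := sq_mul_besselK1Moment_add_two (n := 2 * k + 2) (by lia) ha
    push_cast at hrec
    rw [eq_div_iff (by positivity)] at ih ⊢
    calc besselI1Coeff (k + 1) * besselK1Moment a (2 * k + 2 + 2) * a ^ (2 * k + 3 + 2)
        = besselI1Coeff (k + 1) * (a ^ 2 * besselK1Moment a (2 * k + 2 + 2)) *
            a ^ (2 * k + 3) := by ring
      _ = 4 * (k + 1) * (k + 2) * besselI1Coeff (k + 1) * besselK1Moment a (2 * k + 2) *
            a ^ (2 * k + 3) := by rw [hrec]; ring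
      _ = 1 := by rw [besselI1Coeff_succ, ih]

end BesselK1Moment

section BesselMoment

variable {a : ℝ}

/-- The moment `∫₀^∞ xʲ K₁(a x) I₁(x) dx`. For `j = 1` it is the mass of the measure against
which `log I₁` is integrated in `Fint`. -/
noncomputable def besselMoment (a : ℝ) (j : ℕ) : ℝ :=
  ∫ x in Ioi (0 : ℝ), x ^ j * (besselK1 (a * x) * besselI1 x)

lemma hasSum_pow_mul_besselK1_mul_besselI1 (a x : ℝ) (j : ℕ) :
    HasSum (fun k => besselI1Coeff k * (x ^ (2 * k + 1 + j) * besselK1 (a * x)))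
      (x ^ j * (besselK1 (a * x) * besselI1 x)) := by
  convert! ((hasSum_besselI1 x).mul_left (x ^ j * besselK1 (a * x))) using 1
  · ext k
    ring
  · ring

lemma integral_norm_besselI1Coeff_mul (a : ℝ) (j k : ℕ) :
    ∫ x in Ioi (0 : ℝ), ‖besselI1Coeff k * (x ^ (2 * k + 1 + j) * besselK1 (a * x))‖ =
      besselI1Coeff k * besselK1Moment a (2 * k + 1 + j) := by
  rw [besselK1Moment, ← integral_const_mul]
  refine setIntegral_congr_fun measurableSet_Ioi fun x (hx : 0 < x) => ?_
  have := besselI1Coeff_pos k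
  have := besselK1_nonneg (a * x)
  exact Real.norm_of_nonneg (by positivity)

lemma besselI1Coeff_mul_besselK1Moment_pred_le (ha : 0 < a) (k : ℕ) :
    besselI1Coeff k * besselK1Moment a (2 * k + 1) ≤ 1 / a ^ (2 * k + 2) := by
  have hmoment : besselK1Moment a (2 * k + 1) ≤ a * besselK1Moment a (2 * k + 2) := by
    refine le_trans ?_ (nat_mul_besselK1Moment_le (by lia) ha)
    refine le_mul_of_one_le_left (besselK1Moment_nonneg a _) ?_
    exact_mod_cast Nat.le_add_left 1 (2 * k)
  calc besselI1Coeff k * besselK1Moment a (2 * k + 1)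
      ≤ besselI1Coeff k * (a * besselK1Moment a (2 * k + 2)) := by
        gcongr
        exact (besselI1Coeff_pos k).le
    _ = 1 / a ^ (2 * k + 2) := by
        rw [mul_left_comm, besselI1Coeff_mul_besselK1Moment ha]
        field_simp
        ring

lemma le_besselI1Coeff_mul_besselK1Moment_succ (ha : 0 < a) (k : ℕ) :
    (2 * k + 2) / a ^ (2 * k + 4) ≤ besselI1Coeff k * besselK1Moment a (2 * k + 3) := by
  have hmoment := nat_mul_besselK1Moment_le (n := 2 * k + 2) (by lia) ha
  push_cast at hmoment
  refine le_of_mul_le_mul_left ?_ ha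
  calc a * ((2 * k + 2) / a ^ (2 * k + 4))
      = besselI1Coeff k * ((2 * k + 2) * besselK1Moment a (2 * k + 2)) := by
        rw [mul_left_comm, besselI1Coeff_mul_besselK1Moment ha]
        field_simp
        ring
    _ ≤ besselI1Coeff k * (a * besselK1Moment a (2 * k + 2 + 1)) := by
        gcongr
        exact (besselI1Coeff_pos k).le
    _ = a * (besselI1Coeff k * besselK1Moment a (2 * k + 3)) := by ring

lemma hasSum_one_div_pow_two_mul_add_two (ha : 1 < a) :
    HasSum (fun k : ℕ => 1 / a ^ (2 * k + 2)) (1 / (a ^ 2 - 1)) := by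
  have ha2 : 1 < a ^ 2 := one_lt_pow₀ ha two_ne_zero
  have hgeom := (hasSum_geometric_of_lt_one (by positivity) (inv_lt_one_of_one_lt₀ ha2)).mul_left
    (a ^ 2)⁻¹
  convert! hgeom using 1
  · ext k
    rw [inv_pow, ← pow_mul, pow_add]
    field_simp
  · have := sub_pos.2 ha2
    field_simp

lemma hasSum_succ_div_pow_two_mul_add_four (ha : 1 < a) :
    HasSum (fun k : ℕ => (k + 1) / a ^ (2 * k + 4)) (1 / (a ^ 2 - 1) ^ 2) := by
  have ha2 : 1 < a ^ 2 := one_lt_pow₀ ha two_ne_zero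
  have hnorm : ‖(a ^ 2)⁻¹‖ < 1 := by
    rw [Real.norm_of_nonneg (by positivity)]
    exact inv_lt_one_of_one_lt₀ ha2
  have hgeom := (hasSum_choose_mul_geometric_of_norm_lt_one 1 hnorm).mul_left (a ^ 4)⁻¹
  convert! hgeom using 1
  · ext k
    rw [inv_pow, ← pow_mul, pow_add, Nat.choose_one_right]
    push_cast
    field_simp
  · have := sub_pos.2 ha2
    rw [one_add_one_eq_two]
    field_simp

lemma summable_besselI1Coeff_mul_besselK1Moment (ha : 1 < a) (j : ℕ) :
    Summable fun k => besselI1Coeff k * besselK1Moment a (2 * k + 1 + j) := by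
  have ha0 : 0 < a := one_pos.trans ha
  have hnorm : ‖(a ^ 2)⁻¹‖ < 1 := by
    rw [Real.norm_of_nonneg (by positivity)]
    exact inv_lt_one_of_one_lt₀ (one_lt_pow₀ ha two_ne_zero)
  have hpoly : Summable fun k : ℕ => ((k + 1 : ℕ) : ℝ) ^ j * (a ^ 2)⁻¹ ^ (k + 1) :=
    (summable_pow_mul_geometric_of_norm_lt_one j hnorm).comp_injective (add_left_injective 1)
  refine Summable.of_nonneg_of_le
    (fun k => mul_nonneg (besselI1Coeff_pos k).le (besselK1Moment_nonneg a _))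
    (fun k => ?_) (hpoly.mul_left ((j + 2) ^ j / a ^ j))
  have hadd := pow_mul_besselK1Moment_add_le (n := 2 * k + 1) (by lia) ha0 j
  rw [← le_div_iff₀' (by positivity)] at hadd
  push_cast at hadd ⊢
  have hj : (2 * k + 1 + j : ℝ) ≤ (j + 2) * (k + 1) := by
    nlinarith [(k.cast_nonneg : (0 : ℝ) ≤ k), (j.cast_nonneg : (0 : ℝ) ≤ j)]
  calc besselI1Coeff k * besselK1Moment a (2 * k + 1 + j)
      ≤ besselI1Coeff k * ((2 * k + 1 + j) ^ j * besselK1Moment a (2 * k + 1) / a ^ j) := by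
        gcongr
        exact (besselI1Coeff_pos k).le
    _ = (2 * k + 1 + j) ^ j / a ^ j * (besselI1Coeff k * besselK1Moment a (2 * k + 1)) := by ring
    _ ≤ ((j + 2) * (k + 1)) ^ j / a ^ j * (1 / a ^ (2 * k + 2)) := by
        gcongr
        · exact mul_nonneg (besselI1Coeff_pos k).le (besselK1Moment_nonneg a _)
        · exact besselI1Coeff_mul_besselK1Moment_pred_le ha0 k
    _ = (j + 2) ^ j / a ^ j * ((k + 1) ^ j * (a ^ 2)⁻¹ ^ (k + 1)) := by
        rw [mul_pow, inv_pow, ← pow_mul, mul_add_one]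
        ring

lemma integrableOn_pow_mul_besselK1_mul_besselI1 (ha : 1 < a) (j : ℕ) :
    IntegrableOn (fun x => x ^ j * (besselK1 (a * x) * besselI1 x)) (Ioi 0) :=
  integrable_of_hasSum_of_summable_integral_norm
    (fun k => (integrableOn_pow_mul_besselK1 (by lia) (one_pos.trans ha)).const_mul
      (besselI1Coeff k))
    (by simpa only [integral_norm_besselI1Coeff_mul]
      using summable_besselI1Coeff_mul_besselK1Moment ha j)
    (Eventually.of_forall fun x => hasSum_pow_mul_besselK1_mul_besselI1 a x j)

lemma hasSum_besselMoment (ha : 1 < a) (j : ℕ) :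
    HasSum (fun k => besselI1Coeff k * besselK1Moment a (2 * k + 1 + j)) (besselMoment a j) := by
  have hsum := hasSum_integral_of_summable_integral_norm
    (fun k => (integrableOn_pow_mul_besselK1 (n := 2 * k + 1 + j) (by lia)
      (one_pos.trans ha)).const_mul (besselI1Coeff k))
    (by simpa only [integral_norm_besselI1Coeff_mul]
      using summable_besselI1Coeff_mul_besselK1Moment ha j)
  simp only [integral_const_mul, (hasSum_pow_mul_besselK1_mul_besselI1 a _ j).tsum_eq] at hsum
  exact hsum

lemma besselMoment_zero_le (ha : 1 < a) : besselMoment a 0 ≤ 1 / (a ^ 2 - 1) := by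
  refine hasSum_le (fun k => ?_) (hasSum_besselMoment ha 0)
    (hasSum_one_div_pow_two_mul_add_two ha)
  exact besselI1Coeff_mul_besselK1Moment_pred_le (one_pos.trans ha) k

lemma besselMoment_one (ha : 1 < a) : besselMoment a 1 = 1 / (a * (a ^ 2 - 1)) := by
  have ha0 : 0 < a := one_pos.trans ha
  rw [← one_div_mul_one_div]
  refine (hasSum_besselMoment ha 1).unique ?_
  convert! (hasSum_one_div_pow_two_mul_add_two ha).mul_left (1 / a) using 2 with k
  rw [besselI1Coeff_mul_besselK1Moment ha0]
  field_simp
  ring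

lemma le_besselMoment_two (ha : 1 < a) : 2 / (a ^ 2 - 1) ^ 2 ≤ besselMoment a 2 := by
  rw [← mul_one_div]
  refine hasSum_le (fun k => ?_) ((hasSum_succ_div_pow_two_mul_add_four ha).mul_left 2)
    (hasSum_besselMoment ha 2)
  refine le_trans (le_of_eq ?_)
    (le_besselI1Coeff_mul_besselK1Moment_succ (one_pos.trans ha) k)
  ring

end BesselMoment

section LogIntegral

variable {a m x : ℝ}

lemma le_mul_log_besselI1 (a : ℝ) (hm : 1 / 2 ≤ m) (hx : 0 < x) :
    (1 - 1 / (4 * m)) * (x ^ 2 * (besselK1 (a * x) * besselI1 x)) -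
        x ^ 0 * (besselK1 (a * x) * besselI1 x) -
          log (4 * √m) * (x ^ 1 * (besselK1 (a * x) * besselI1 x)) ≤
      x * besselK1 (a * x) * besselI1 x * log (besselI1 x) := by
  have := besselK1_nonneg (a * x)
  have := besselI1_pos hx
  calc (1 - 1 / (4 * m)) * (x ^ 2 * (besselK1 (a * x) * besselI1 x)) -
        x ^ 0 * (besselK1 (a * x) * besselI1 x) -
          log (4 * √m) * (x ^ 1 * (besselK1 (a * x) * besselI1 x))
      = x * besselK1 (a * x) * besselI1 x *
          ((1 - 1 / (4 * m)) * x - 1 / x - log (4 * √m)) := by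
        field_simp
    _ ≤ x * besselK1 (a * x) * besselI1 x * log (besselI1 x) := by
        gcongr
        exact le_log_besselI1 hm hx

lemma mul_log_besselI1_le (a : ℝ) (hx : 0 < x) :
    x * besselK1 (a * x) * besselI1 x * log (besselI1 x) ≤
      x ^ 2 * (besselK1 (a * x) * besselI1 x) := by
  have := besselK1_nonneg (a * x)
  have := besselI1_pos hx
  calc x * besselK1 (a * x) * besselI1 x * log (besselI1 x)
      ≤ x * besselK1 (a * x) * besselI1 x * x := by
        gcongr
        exact log_besselI1_le hx
    _ = x ^ 2 * (besselK1 (a * x) * besselI1 x) := by ring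

lemma integrableOn_mul_log_besselI1 (ha : 1 < a) :
    IntegrableOn (fun x => x * besselK1 (a * x) * besselI1 x * log (besselI1 x)) (Ioi 0) := by
  have hint := integrableOn_pow_mul_besselK1_mul_besselI1 ha
  have hmeas : Measurable fun x => x * besselK1 (a * x) * besselI1 x * log (besselI1 x) := by
    have := measurable_besselK1
    have := measurable_besselI1
    fun_prop
  exact integrable_of_le_of_le hmeas.aestronglyMeasurable
    (ae_restrict_of_forall_mem measurableSet_Ioi fun _ hx => le_mul_log_besselI1 a le_rfl hx)
    (ae_restrict_of_forall_mem measurableSet_Ioi fun _ hx => mul_log_besselI1_le a hx)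
    ((((hint 2).const_mul _).sub (hint 0)).sub ((hint 1).const_mul _)) (hint 2)

lemma le_integral_mul_log_besselI1 (ha : 1 < a) (hm : 1 / 2 ≤ m) :
    (1 - 1 / (4 * m)) * besselMoment a 2 - besselMoment a 0 - log (4 * √m) * besselMoment a 1 ≤
      ∫ x in Ioi (0 : ℝ), x * besselK1 (a * x) * besselI1 x * log (besselI1 x) := by
  have hint := integrableOn_pow_mul_besselK1_mul_besselI1 ha
  have hint₂ := (hint 2).const_mul (1 - 1 / (4 * m))
  have hint₁ := (hint 1).const_mul (log (4 * √m))
  have hint₂₀ := hint₂.sub' (hint 0)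
  unfold besselMoment
  rw [← integral_const_mul, ← integral_const_mul, ← integral_sub hint₂ (hint 0),
    ← integral_sub hint₂₀ hint₁]
  exact setIntegral_mono_on (hint₂₀.sub' hint₁) (integrableOn_mul_log_besselI1 ha)
    measurableSet_Ioi fun _ hx => le_mul_log_besselI1 a hm hx

end LogIntegral

section Digamma

variable {x : ℝ}

lemma differentiableAt_log_Gamma (hx : 0 < x) :
    DifferentiableAt ℝ (fun y => log (Real.Gamma y)) x :=
  (Real.differentiableAt_Gamma fun m => ne_of_gt (by linarith [(m.cast_nonneg : (0 : ℝ) ≤ m)])).log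
    (Real.Gamma_pos_of_pos hx).ne'

lemma digamma_add_one (hx : 0 < x) : digamma (x + 1) = digamma x + x⁻¹ := by
  unfold digamma
  rw [← deriv_comp_add_const, ← Real.deriv_log x,
    ← deriv_fun_add (differentiableAt_log_Gamma hx) (Real.differentiableAt_log hx.ne')]
  refine EventuallyEq.deriv_eq ?_
  filter_upwards [eventually_gt_nhds hx] with y hy
  rw [Real.Gamma_add_one hy.ne', Real.log_mul hy.ne' (Real.Gamma_pos_of_pos hy).ne', add_comm]

lemma monotoneOn_digamma : MonotoneOn digamma (Ioi 0) :=
  Real.convexOn_log_Gamma.monotoneOn_deriv fun _ hx => differentiableAt_log_Gamma hx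

lemma neg_inv_le_digamma_sub_digamma_one (hx : 0 < x) : -x⁻¹ ≤ digamma x - digamma 1 := by
  have hmono : digamma 1 ≤ digamma (x + 1) :=
    monotoneOn_digamma (mem_Ioi.2 one_pos) (mem_Ioi.2 (by positivity)) (by linarith)
  linarith [digamma_add_one hx]

end Digamma

lemma two_mul_sub_le_Fint {ρ : ℝ} (hρ : 1 ≤ ρ) :
    2 * ρ - 3 / 2 - log (4 * √ρ) ≤ ρ⁻¹ * √(1 + ρ⁻¹) * Fint ρ := by
  have hρ0 : 0 < ρ := by linarith
  have ha : 1 < √(1 + ρ⁻¹) := by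
    rw [Real.lt_sqrt one_pos.le, one_pow]
    exact lt_add_of_pos_right 1 (inv_pos.2 hρ0)
  have hsq : √(1 + ρ⁻¹) ^ 2 - 1 = ρ⁻¹ := by rw [Real.sq_sqrt (by positivity), add_sub_cancel_left]
  have hF := le_integral_mul_log_besselI1 (m := ρ) ha (by linarith)
  have h₀ := besselMoment_zero_le ha
  have h₁ := besselMoment_one ha
  have h₂ := le_besselMoment_two ha
  rw [hsq] at h₀ h₁ h₂
  have hcoeff : 0 ≤ 1 - 1 / (4 * ρ) := by
    rw [sub_nonneg, div_le_one₀ (by positivity)]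
    linarith
  calc 2 * ρ - 3 / 2 - log (4 * √ρ)
      ≤ √(1 + ρ⁻¹) * (2 * ρ - 3 / 2) - log (4 * √ρ) := by
        gcongr
        exact le_mul_of_one_le_left (by linarith) ha.le
    _ = ρ⁻¹ * √(1 + ρ⁻¹) * ((1 - 1 / (4 * ρ)) * (2 / ρ⁻¹ ^ 2) - 1 / ρ⁻¹ -
          log (4 * √ρ) * (1 / (√(1 + ρ⁻¹) * ρ⁻¹))) := by
        generalize √(1 + ρ⁻¹) = a at *
        field_simp
        ring
    _ ≤ ρ⁻¹ * √(1 + ρ⁻¹) * ((1 - 1 / (4 * ρ)) * besselMoment √(1 + ρ⁻¹) 2 -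
          besselMoment √(1 + ρ⁻¹) 0 - log (4 * √ρ) * besselMoment √(1 + ρ⁻¹) 1) := by
        rw [h₁]
        gcongr
    _ ≤ ρ⁻¹ * √(1 + ρ⁻¹) * Fint ρ := by
        gcongr
        exact hF

lemma half_log_sub_le_Ixy {ρ : ℝ} (hρ : 1 ≤ ρ) : log ρ / 2 - (5 / 2 + log 4) ≤ Ixy ρ := by
  have hρ0 : 0 < ρ := by linarith
  have ha : 1 ≤ √(1 + ρ⁻¹) := Real.one_le_sqrt.2 (by linarith [inv_pos.2 hρ0])
  have hlog : log ρ ≤ log (ρ * √(1 + ρ⁻¹)) :=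
    Real.log_le_log hρ0 (le_mul_of_one_le_right hρ0.le ha)
  have hlog' : 0 ≤ ρ⁻¹ * log √(1 + ρ) :=
    mul_nonneg (inv_pos.2 hρ0).le (Real.log_nonneg (Real.one_le_sqrt.2 (by linarith)))
  have hψ := neg_inv_le_digamma_sub_digamma_one (inv_pos.2 hρ0)
  have hF := two_mul_sub_le_Fint hρ
  rw [Real.log_mul four_ne_zero (by positivity), Real.log_sqrt hρ0.le] at hF
  rw [inv_inv] at hψ
  unfold Ixy
  linarith

/-- the capacity lower bound I_XY(ρ) grows without bound as ρ → ∞. -/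
theorem stmt_10 : Tendsto Ixy atTop atTop := by
  have hlog : Tendsto (fun ρ : ℝ => log ρ / 2 - (5 / 2 + log 4)) atTop atTop :=
    tendsto_atTop_add_const_right _ _ (Real.tendsto_log_atTop.atTop_div_const two_pos)
  refine tendsto_atTop_mono' _ ?_ hlog
  filter_upwards [eventually_ge_atTop 1] with ρ hρ using half_log_sub_le_Ixy hρ
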